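/- The set of singular points of the sextic surface B₆ = 0 in ℙ³(ℂ) consists of exactly the 27 points represented by (1, 0, a, b), (1, a, 0, b) and (1, a, b, 0) where a, b ∈ ℂ satisfy a³ = b³ = −1/3; in particular this set has exactly 27 elements and none of these points lies on the Fermat cubic R = 0. -/

import Mathlib

open MvPolynomial

/-- The Fermat cubic `R = y₀³ + y₁³ + y₂³ + y₃³`. -/
noncomputable def fermatR : MvPolynomial (Fin 4) ℂ := X 0 ^ 3 + X 1 ^ 3 + X 2 ^ 3 + X 3 ^ 3

/-- The cubic `S₁ = y₁³ + R`. -/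
noncomputable def fermatS1 : MvPolynomial (Fin 4) ℂ := X 1 ^ 3 + fermatR

/-- The cubic `S₂ = y₂³ + R`. -/
noncomputable def fermatS2 : MvPolynomial (Fin 4) ℂ := X 2 ^ 3 + fermatR

/-- The cubic `S₃ = y₃³ + R`. -/
noncomputable def fermatS3 : MvPolynomial (Fin 4) ℂ := X 3 ^ 3 + fermatR

/-- The cubic `S = y₁·y₂·y₃`. -/
noncomputable def fermatQ : MvPolynomial (Fin 4) ℂ := X 1 * X 2 * X 3


lemma fermatR_ne_zero : fermatR ≠ 0 := by
  intro h
  have := congrArg (eval (![1, 0, 0, 0] : Fin 4 → ℂ)) h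
  simp [fermatR] at this

lemma B6_eq (B6 : MvPolynomial (Fin 4) ℂ)
    (hB6 : fermatR * B6 = fermatS1 * fermatS2 * fermatS3 - fermatQ ^ 3) :
    B6 = fermatR ^ 2 + (X 1 ^ 3 + X 2 ^ 3 + X 3 ^ 3) * fermatR
      + (X 1 ^ 3 * X 2 ^ 3 + X 1 ^ 3 * X 3 ^ 3 + X 2 ^ 3 * X 3 ^ 3) := by
  apply mul_left_cancel₀ fermatR_ne_zero
  rw [hB6, fermatS1, fermatS2, fermatS3, fermatQ]
  ring

lemma grad_iff (B6 : MvPolynomial (Fin 4) ℂ)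
    (hB6 : fermatR * B6 = fermatS1 * fermatS2 * fermatS3 - fermatQ ^ 3) (x : Fin 4 → ℂ) :
    (∀ i : Fin 4, eval x (pderiv i B6) = 0) ↔
      (x 0 = 0 ∨ 2 * x 0 ^ 3 + 3 * (x 1 ^ 3 + x 2 ^ 3 + x 3 ^ 3) = 0) ∧
      (x 1 = 0 ∨ 3 * x 0 ^ 3 + 5 * (x 1 ^ 3 + x 2 ^ 3 + x 3 ^ 3) = x 1 ^ 3) ∧
      (x 2 = 0 ∨ 3 * x 0 ^ 3 + 5 * (x 1 ^ 3 + x 2 ^ 3 + x 3 ^ 3) = x 2 ^ 3) ∧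
      (x 3 = 0 ∨ 3 * x 0 ^ 3 + 5 * (x 1 ^ 3 + x 2 ^ 3 + x 3 ^ 3) = x 3 ^ 3) := by
  have key : ∀ y F D : ℂ, D = 3 * y ^ 2 * F → (D = 0 ↔ (y = 0 ∨ F = 0)) := by
    intro y F D h
    rw [h]; simp
  rw [B6_eq B6 hB6, Fin.forall_fin_succ, Fin.forall_fin_succ, Fin.forall_fin_succ,
    Fin.forall_fin_succ]
  have h0 := key (x 0) (2 * x 0 ^ 3 + 3 * (x 1 ^ 3 + x 2 ^ 3 + x 3 ^ 3))
  have h1 := key (x 1) (3 * x 0 ^ 3 + 5 * (x 1 ^ 3 + x 2 ^ 3 + x 3 ^ 3) - x 1 ^ 3)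
  have h2 := key (x 2) (3 * x 0 ^ 3 + 5 * (x 1 ^ 3 + x 2 ^ 3 + x 3 ^ 3) - x 2 ^ 3)
  have h3 := key (x 3) (3 * x 0 ^ 3 + 5 * (x 1 ^ 3 + x 2 ^ 3 + x 3 ^ 3) - x 3 ^ 3)
  simp only [sub_eq_zero] at h1 h2 h3
  simp only [IsEmpty.forall_iff, and_true]
  refine and_congr (h0 _ ?_) (and_congr (h1 _ ?_) (and_congr (h2 _ ?_) (h3 _ ?_))) <;>
  · simp [fermatR, pderiv_X, Pi.single_apply]
    ring

lemma sol_iff (x : Fin 4 → ℂ) (hx : x ≠ 0) :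
    ((x 0 = 0 ∨ 2 * x 0 ^ 3 + 3 * (x 1 ^ 3 + x 2 ^ 3 + x 3 ^ 3) = 0) ∧
      (x 1 = 0 ∨ 3 * x 0 ^ 3 + 5 * (x 1 ^ 3 + x 2 ^ 3 + x 3 ^ 3) = x 1 ^ 3) ∧
      (x 2 = 0 ∨ 3 * x 0 ^ 3 + 5 * (x 1 ^ 3 + x 2 ^ 3 + x 3 ^ 3) = x 2 ^ 3) ∧
      (x 3 = 0 ∨ 3 * x 0 ^ 3 + 5 * (x 1 ^ 3 + x 2 ^ 3 + x 3 ^ 3) = x 3 ^ 3)) ↔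
    x 0 ≠ 0 ∧ ((x 1 = 0 ∧ x 2 ^ 3 = - (x 0 ^ 3 / 3) ∧ x 3 ^ 3 = - (x 0 ^ 3 / 3)) ∨
      (x 2 = 0 ∧ x 1 ^ 3 = - (x 0 ^ 3 / 3) ∧ x 3 ^ 3 = - (x 0 ^ 3 / 3)) ∨
      (x 3 = 0 ∧ x 1 ^ 3 = - (x 0 ^ 3 / 3) ∧ x 2 ^ 3 = - (x 0 ^ 3 / 3))) := by
  have hne : ¬ (x 0 = 0 ∧ x 1 = 0 ∧ x 2 = 0 ∧ x 3 = 0) := by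
    rintro ⟨h0, h1, h2, h3⟩
    apply hx
    ext i
    fin_cases i <;> simp [h0, h1, h2, h3]
  have hc : ∀ y : ℂ, y = 0 ↔ y ^ 3 = 0 := fun y => by simp
  generalize x 0 = p at *
  generalize x 1 = q at *
  generalize x 2 = r at *
  generalize x 3 = s at *
  simp only [ne_eq, hc p, hc q, hc r, hc s] at *
  generalize p ^ 3 = p at *
  generalize q ^ 3 = q at *
  generalize r ^ 3 = r at *
  generalize s ^ 3 = s at *
  clear hc hx x
  constructor
  · rintro ⟨h0 | h0, h1 | h1, h2 | h2, h3 | h3⟩ <;> grind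
  · rintro ⟨h0, ⟨h1, h2, h3⟩ | ⟨h1, h2, h3⟩ | ⟨h1, h2, h3⟩⟩ <;> grind

lemma card_roots : (Polynomial.nthRootsFinset 3 (-(1/3) : ℂ)).card = 3 := by
  classical
  obtain ⟨α, hα⟩ := IsAlgClosed.exists_pow_nat_eq (-(1/3) : ℂ) (n := 3) (by norm_num)
  have hp := Complex.isPrimitiveRoot_exp 3 (by norm_num)
  rw [Polynomial.nthRootsFinset, Multiset.toFinset_card_of_nodup (hp.nthRoots_nodup (by norm_num)),
    hp.card_nthRoots, if_pos ⟨α, hα⟩]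

def pt : Fin 3 → ℂ → ℂ → (Fin 4 → ℂ)
  | 0, a, b => ![1, 0, a, b]
  | 1, a, b => ![1, a, 0, b]
  | 2, a, b => ![1, a, b, 0]

lemma pt_zero (i : Fin 3) (a b : ℂ) : pt i a b 0 = 1 := by
  fin_cases i <;> rfl

lemma pt_ne (i : Fin 3) (a b : ℂ) : pt i a b ≠ 0 := by
  intro h
  have := congrFun h 0
  rw [pt_zero] at this
  simp at this

lemma pt_inj (i j : Fin 3) (a b c d : ℂ) (ha : a ≠ 0) (hb : b ≠ 0) (hc : c ≠ 0) (hd : d ≠ 0)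
    (h : pt i a b = pt j c d) : i = j ∧ a = c ∧ b = d := by
  have h1 := congrFun h 1
  have h2 := congrFun h 2
  have h3 := congrFun h 3
  fin_cases i <;> fin_cases j <;> simp_all [pt]

lemma target_eq : {p : Projectivization ℂ (Fin 4 → ℂ) |
          ∃ (x : Fin 4 → ℂ) (hx : x ≠ 0), Projectivization.mk ℂ x hx = p ∧
            ∃ a b : ℂ, a ^ 3 = -(1/3) ∧ b ^ 3 = -(1/3) ∧
              (x = ![1, 0, a, b] ∨ x = ![1, a, 0, b] ∨ x = ![1, a, b, 0])} =
    Set.image (fun t : Fin 3 × ℂ × ℂ => Projectivization.mk ℂ (pt t.1 t.2.1 t.2.2) (pt_ne _ _ _))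
      (((Finset.univ : Finset (Fin 3)) ×ˢ (Polynomial.nthRootsFinset 3 (-(1/3) : ℂ)) ×ˢ
        (Polynomial.nthRootsFinset 3 (-(1/3) : ℂ)) : Finset (Fin 3 × ℂ × ℂ)) :
        Set (Fin 3 × ℂ × ℂ)) := by
  ext p
  simp only [Set.mem_setOf_eq, Set.mem_image, Finset.mem_coe, Finset.mem_product,
    Finset.mem_univ, true_and, Polynomial.mem_nthRootsFinset (show 0 < 3 by norm_num)]
  constructor
  · rintro ⟨x, hx, rfl, a, b, ha, hb, rfl | rfl | rfl⟩
    · exact ⟨(0, a, b), ⟨ha, hb⟩, rfl⟩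
    · exact ⟨(1, a, b), ⟨ha, hb⟩, rfl⟩
    · exact ⟨(2, a, b), ⟨ha, hb⟩, rfl⟩
  · rintro ⟨⟨i, a, b⟩, ⟨ha, hb⟩, rfl⟩
    refine ⟨_, pt_ne i a b, rfl, a, b, ha, hb, ?_⟩
    fin_cases i <;> simp [pt]

lemma target_card : {p : Projectivization ℂ (Fin 4 → ℂ) |
          ∃ (x : Fin 4 → ℂ) (hx : x ≠ 0), Projectivization.mk ℂ x hx = p ∧
            ∃ a b : ℂ, a ^ 3 = -(1/3) ∧ b ^ 3 = -(1/3) ∧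
              (x = ![1, 0, a, b] ∨ x = ![1, a, 0, b] ∨ x = ![1, a, b, 0])}.ncard = 27 := by
  rw [target_eq, Set.ncard_image_of_injOn, Set.ncard_coe_finset]
  · simp only [Finset.card_product, card_roots, Finset.card_univ, Fintype.card_fin]
  · rintro ⟨i, a, b⟩ h ⟨j, c, d⟩ h' e
    simp only [Finset.mem_coe, Finset.mem_product,
      Finset.mem_univ, true_and, Polynomial.mem_nthRootsFinset (show 0 < 3 by norm_num)] at h h'
    have nz : ∀ z : ℂ, z ^ 3 = -(1/3) → z ≠ 0 := by
      rintro z hz rfl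
      norm_num at hz
    simp only [Projectivization.mk_eq_mk_iff'] at e
    obtain ⟨k, hk⟩ := e
    have hk0 := congrFun hk 0
    simp only [Pi.smul_apply, pt_zero, smul_eq_mul, mul_one] at hk0
    rw [hk0, one_smul] at hk
    obtain ⟨rfl, rfl, rfl⟩ := pt_inj _ _ _ _ _ _ (nz _ h'.1) (nz _ h'.2) (nz _ h.1) (nz _ h.2) hk
    rfl

/-- The singular locus of the residual sextic `B₆` (the unique polynomial with
`R·B₆ = S₁·S₂·S₃ − S³`) consists exactly of the `27` points represented by
`(1,0,a,b)`, `(1,a,0,b)`, `(1,a,b,0)` with `a³ = b³ = −1/3`; there are exactly `27`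
of them and none lies on the Fermat cubic `R = 0`. -/
theorem sing_residual_sextic (B6 : MvPolynomial (Fin 4) ℂ)
    (hB6 : fermatR * B6 = fermatS1 * fermatS2 * fermatS3 - fermatQ ^ 3) :
    ({p : Projectivization ℂ (Fin 4 → ℂ) |
        ∃ (x : Fin 4 → ℂ) (hx : x ≠ 0), Projectivization.mk ℂ x hx = p ∧
          ∀ i : Fin 4, eval x (pderiv i B6) = 0}
      = {p : Projectivization ℂ (Fin 4 → ℂ) |
          ∃ (x : Fin 4 → ℂ) (hx : x ≠ 0), Projectivization.mk ℂ x hx = p ∧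
            ∃ a b : ℂ, a ^ 3 = -(1/3) ∧ b ^ 3 = -(1/3) ∧
              (x = ![1, 0, a, b] ∨ x = ![1, a, 0, b] ∨ x = ![1, a, b, 0])}) ∧
    {p : Projectivization ℂ (Fin 4 → ℂ) |
        ∃ (x : Fin 4 → ℂ) (hx : x ≠ 0), Projectivization.mk ℂ x hx = p ∧
          ∀ i : Fin 4, eval x (pderiv i B6) = 0}.ncard = 27 ∧
    ∀ x : Fin 4 → ℂ, x ≠ 0 → (∀ i : Fin 4, eval x (pderiv i B6) = 0) →
      eval x fermatR ≠ 0 := by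
  have hiff : ∀ x : Fin 4 → ℂ, x ≠ 0 → _ := fun x hx =>
    (grad_iff B6 hB6 x).trans (sol_iff x hx)
  rw [← and_assoc]
  refine ⟨(fun h => ⟨h, h ▸ target_card⟩) ?_, ?_⟩
  · ext p
    constructor
    · rintro ⟨x, hx, rfl, hg⟩
      obtain ⟨h0, h⟩ := (hiff x hx).1 hg
      have hs : (x 0)⁻¹ • x ≠ 0 := smul_ne_zero (inv_ne_zero h0) hx
      have hd : ∀ i, x i ^ 3 = - (x 0 ^ 3 / 3) → ((x 0)⁻¹ * x i) ^ 3 = -(1/3) := by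
        intro i hi
        rw [mul_pow, hi]
        field_simp
      have hinv := inv_mul_cancel₀ h0
      refine ⟨(x 0)⁻¹ • x, hs, (Projectivization.mk_eq_mk_iff' ℂ _ _ _ _).2 ⟨(x 0)⁻¹, rfl⟩, ?_⟩
      rcases h with ⟨h1, h2, h3⟩ | ⟨h1, h2, h3⟩ | ⟨h1, h2, h3⟩
      · refine ⟨_, _, hd _ h2, hd _ h3, Or.inl ?_⟩
        ext i
        fin_cases i <;> simp [h1, hinv]
      · refine ⟨_, _, hd _ h2, hd _ h3, Or.inr (Or.inl ?_)⟩
        ext i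
        fin_cases i <;> simp [h1, hinv]
      · refine ⟨_, _, hd _ h2, hd _ h3, Or.inr (Or.inr ?_)⟩
        ext i
        fin_cases i <;> simp [h1, hinv]
    · rintro ⟨x, hx, rfl, a, b, ha, hb, h⟩
      refine ⟨x, hx, rfl, (hiff x hx).2 ?_⟩
      rcases h with rfl | rfl | rfl <;> simp [ha, hb]
  · intro x hx hg
    obtain ⟨h0, h⟩ := (hiff x hx).1 hg
    have h0' : x 0 ^ 3 ≠ 0 := pow_ne_zero 3 h0
    simp only [fermatR, map_add, map_pow, eval_X]
    rcases h with ⟨h1, h2, h3⟩ | ⟨h1, h2, h3⟩ | ⟨h1, h2, h3⟩ <;> grind
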